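/- Let $p$ be an odd prime and let $\mathcal{O}_p \subset M_2(\mathbb{Q}_p)$ be the order of the previous context (with $r, s \geq 1$). Then the reduced norm of the unit group satisfies $\det(\mathcal{O}_p^\times) = \mathbb{Z}_p^{\times 2}$. -/

import Mathlib

open Matrix

/-!
Modulo an ideal containing `π` and `α`, an element of the lattice is upper triangular with both
diagonal entries equal to some `a`, so its determinant is congruent to `a ^ 2`. When the element is
invertible in the lattice, its determinant is a unit, and Hensel's lemma lifts the square root `a`
modulo the ideal to an actual one. Conversely, `u ^ 2` is the determinant of the scalar matrix `u`.
-/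

section Hensel

variable {R : Type*} [CommRing R] {I : Ideal R} [HenselianRing R I]

open Polynomial in
theorem isSquare_of_sub_sq_mem (h_two : IsUnit (2 : R)) {x a : R} (hx : IsUnit x)
    (hxa : x - a ^ 2 ∈ I) : IsSquare x := by
  have h_sq : Ideal.Quotient.mk I x = Ideal.Quotient.mk I a ^ 2 := by
    rw [← map_pow, Ideal.Quotient.eq]
    exact hxa
  have ha : IsUnit (Ideal.Quotient.mk I a) :=
    (isUnit_pow_iff two_ne_zero).1 (h_sq ▸ hx.map (Ideal.Quotient.mk I))
  have h_eval : (X ^ 2 - C x).eval a ∈ I := by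
    simpa using I.neg_mem hxa
  have h_deriv : IsUnit (Ideal.Quotient.mk I ((X ^ 2 - C x).derivative.eval a)) := by
    simpa [one_add_one_eq_two] using (h_two.map (Ideal.Quotient.mk I)).mul ha
  obtain ⟨b, hb, -⟩ :=
    HenselianRing.is_henselian (X ^ 2 - C x) (monic_X_pow_sub_C x two_ne_zero) a h_eval h_deriv
  have hb_sq : b ^ 2 = x := by simpa [sub_eq_zero] using hb
  exact ⟨b, by rw [← hb_sq, sq]⟩

end Hensel

/-- The `R`-lattice in `M₂(K)` spanned by `1`, `!![0, 1; π, 0]`, `!![α, 0; 0, 0]` and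
`!![0, β; 0, 0]`. The `𝒪_p` of the theorem is the case `R = ℤ_p`, `K = ℚ_p`, `π = p`, `α = p ^ r`,
`β = p ^ s`. It is only a submodule, since for general parameters the span is not closed under
multiplication. -/
def orderLattice {R : Type*} (K : Type*) [CommRing R] [CommRing K] [Algebra R K] (π α β : R) :
    Submodule R (Matrix (Fin 2) (Fin 2) K) :=
  Submodule.span R {1, !![0, 1; algebraMap R K π, 0], !![algebraMap R K α, 0; 0, 0],
    !![0, algebraMap R K β; 0, 0]}

section Lattice

variable {R K : Type*} [CommRing R] [CommRing K] [Algebra R K] {π α β : R}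
  {y z : Matrix (Fin 2) (Fin 2) K}

theorem exists_map_eq_of_mem_orderLattice (hy : y ∈ orderLattice K π α β) :
    ∃ a b c d : R, !![a + c * α, b + d * β; b * π, a].map (algebraMap R K) = y := by
  simp only [orderLattice, Submodule.mem_span_insert, Submodule.mem_span_singleton] at hy
  obtain ⟨a, _, ⟨b, _, ⟨c, _, ⟨d, rfl⟩, rfl⟩, rfl⟩, rfl⟩ := hy
  refine ⟨a, b, c, d, ?_⟩
  ext i j
  fin_cases i <;> fin_cases j <;> simp [Algebra.algebraMap_eq_smul_one, add_smul, mul_smul]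

theorem smul_one_mem_orderLattice (a : R) : a • 1 ∈ orderLattice K π α β :=
  Submodule.smul_mem _ a (Submodule.subset_span (Set.mem_insert _ _))

theorem det_smul_one_fin_two (a : R) :
    (a • (1 : Matrix (Fin 2) (Fin 2) K)).det = algebraMap R K a ^ 2 := by
  rw [← algebraMap_smul K a, det_smul, det_one, mul_one, Fintype.card_fin]

theorem exists_algebraMap_eq_det_of_mem_orderLattice {I : Ideal R} (hπ : π ∈ I) (hα : α ∈ I)
    (hy : y ∈ orderLattice K π α β) :
    ∃ x a : R, algebraMap R K x = y.det ∧ x - a ^ 2 ∈ I := by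
  obtain ⟨a, b, c, d, rfl⟩ := exists_map_eq_of_mem_orderLattice hy
  refine ⟨_, a, RingHom.map_det _ _, ?_⟩
  have h_det : !![a + c * α, b + d * β; b * π, a].det - a ^ 2
      = a * c * α - (b + d * β) * b * π := by
    rw [det_fin_two_of]
    ring
  rw [h_det]
  exact I.sub_mem (I.mul_mem_left _ hα) (I.mul_mem_left _ hπ)

theorem exists_det_eq_sq_of_mul_eq_one [FaithfulSMul R K] {I : Ideal R} [HenselianRing R I]
    (h_two : IsUnit (2 : R)) (hπ : π ∈ I) (hα : α ∈ I) (hy : y ∈ orderLattice K π α β)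
    (hz : z ∈ orderLattice K π α β) (hyz : y * z = 1) :
    ∃ u : Rˣ, y.det = algebraMap R K u ^ 2 := by
  obtain ⟨x, a, hx, hxa⟩ := exists_algebraMap_eq_det_of_mem_orderLattice hπ hα hy
  obtain ⟨x', -, hx', -⟩ := exists_algebraMap_eq_det_of_mem_orderLattice hπ hα hz
  have hxx' : x * x' = 1 := FaithfulSMul.algebraMap_injective R K <| by
    rw [map_mul, hx, hx', ← det_mul, hyz, det_one, map_one]
  have hx_unit : IsUnit x := .of_mul_eq_one x' hxx'
  obtain ⟨b, rfl⟩ := isSquare_of_sub_sq_mem h_two hx_unit hxa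
  obtain ⟨u, rfl⟩ := isUnit_of_mul_isUnit_left hx_unit
  exact ⟨u, by rw [← hx, map_mul, sq]⟩

theorem exists_mem_orderLattice_det_eq_sq (u : Rˣ) :
    ∃ y ∈ orderLattice K π α β, (∃ z ∈ orderLattice K π α β, y * z = 1 ∧ z * y = 1) ∧
      y.det = algebraMap R K u ^ 2 := by
  refine ⟨_, smul_one_mem_orderLattice (u : R), ⟨_, smul_one_mem_orderLattice (↑u⁻¹ : R), ?_, ?_⟩,
    det_smul_one_fin_two _⟩
  · rw [smul_mul_smul_comm, Units.mul_inv, one_smul, mul_one]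
  · rw [smul_mul_smul_comm, Units.inv_mul, one_smul, mul_one]

theorem det_unit_group_eq_squares_general [FaithfulSMul R K] (I : Ideal R) [HenselianRing R I]
    (h_two : IsUnit (2 : R)) (hπ : π ∈ I) (hα : α ∈ I) :
    (∀ y ∈ orderLattice K π α β, (∃ z ∈ orderLattice K π α β, y * z = 1 ∧ z * y = 1) →
      ∃ u : Rˣ, y.det = algebraMap R K u ^ 2) ∧
    ∀ u : Rˣ, ∃ y ∈ orderLattice K π α β,
      (∃ z ∈ orderLattice K π α β, y * z = 1 ∧ z * y = 1) ∧ y.det = algebraMap R K u ^ 2 :=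
  ⟨fun _ hy ⟨_, hz, hyz, _⟩ => exists_det_eq_sq_of_mul_eq_one h_two hπ hα hy hz hyz,
    exists_mem_orderLattice_det_eq_sq⟩

end Lattice

section Padic

variable {p : ℕ} [Fact p.Prime]

theorem isUnit_two_padicInt (hp : p ≠ 2) : IsUnit (2 : ℤ_[p]) := by
  rw [PadicInt.isUnit_iff]
  exact_mod_cast PadicInt.norm_natCast_eq_one_iff.2
    ((Nat.coprime_primes Fact.out Nat.prime_two).2 hp)

theorem natCast_mem_maximalIdeal_padicInt : (p : ℤ_[p]) ∈ IsLocalRing.maximalIdeal ℤ_[p] :=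
  PadicInt.maximalIdeal_eq_span_p (p := p) ▸ Ideal.mem_span_singleton_self _

theorem orderLattice_padic (r s : ℕ) :
    orderLattice ℚ_[p] (p : ℤ_[p]) ((p : ℤ_[p]) ^ r) ((p : ℤ_[p]) ^ s) =
      Submodule.span ℤ_[p] {1, !![0, 1; (p : ℚ_[p]), 0], !![(p : ℚ_[p]) ^ r, 0; 0, 0],
        !![0, (p : ℚ_[p]) ^ s; 0, 0]} := by
  simp only [orderLattice, map_pow, map_natCast]

end Padic

/-- Let `p` be an odd prime, `r ≥ s ≥ 1`, and `𝒪_p ⊂ M₂(ℚ_p)` the `ℤ_p`-span of `1`,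
`!![0,1;p,0]`, `!![p^r,0;0,0]`, `!![0,p^s;0,0]`. Then the reduced norm (determinant) of
the unit group of `𝒪_p` is exactly the group `ℤ_p^{×2}` of squares of units: every unit
of `𝒪_p` has determinant a square of a unit of `ℤ_p`, and every square of a unit of
`ℤ_p` arises as the determinant of a unit of `𝒪_p`. -/
theorem det_unit_group_eq_squares
    (p : ℕ) [Fact p.Prime] (hp : p ≠ 2) (r s : ℕ) (hs : 1 ≤ s) (hrs : s ≤ r) :
    (∀ y ∈ Submodule.span ℤ_[p]
        ({(1 : Matrix (Fin 2) (Fin 2) ℚ_[p]), !![0, 1; (p : ℚ_[p]), 0],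
          !![(p : ℚ_[p]) ^ r, 0; 0, 0], !![0, (p : ℚ_[p]) ^ s; 0, 0]} :
            Set (Matrix (Fin 2) (Fin 2) ℚ_[p])),
      (∃ z ∈ Submodule.span ℤ_[p]
        ({(1 : Matrix (Fin 2) (Fin 2) ℚ_[p]), !![0, 1; (p : ℚ_[p]), 0],
          !![(p : ℚ_[p]) ^ r, 0; 0, 0], !![0, (p : ℚ_[p]) ^ s; 0, 0]} :
            Set (Matrix (Fin 2) (Fin 2) ℚ_[p])), y * z = 1 ∧ z * y = 1) →
        ∃ u : ℤ_[p]ˣ, y.det = (((u : ℤ_[p]) : ℚ_[p])) ^ 2) ∧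
    (∀ u : ℤ_[p]ˣ, ∃ y ∈ Submodule.span ℤ_[p]
        ({(1 : Matrix (Fin 2) (Fin 2) ℚ_[p]), !![0, 1; (p : ℚ_[p]), 0],
          !![(p : ℚ_[p]) ^ r, 0; 0, 0], !![0, (p : ℚ_[p]) ^ s; 0, 0]} :
            Set (Matrix (Fin 2) (Fin 2) ℚ_[p])),
      (∃ z ∈ Submodule.span ℤ_[p]
        ({(1 : Matrix (Fin 2) (Fin 2) ℚ_[p]), !![0, 1; (p : ℚ_[p]), 0],
          !![(p : ℚ_[p]) ^ r, 0; 0, 0], !![0, (p : ℚ_[p]) ^ s; 0, 0]} :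
            Set (Matrix (Fin 2) (Fin 2) ℚ_[p])), y * z = 1 ∧ z * y = 1) ∧
        y.det = (((u : ℤ_[p]) : ℚ_[p])) ^ 2) := by
  have hp_mem := natCast_mem_maximalIdeal_padicInt (p := p)
  simpa only [orderLattice_padic, PadicInt.algebraMap_apply] using
    det_unit_group_eq_squares_general (K := ℚ_[p]) (β := (p : ℤ_[p]) ^ s) _
      (isUnit_two_padicInt hp) hp_mem (Ideal.pow_mem_of_mem _ hp_mem r (hs.trans hrs))
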